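/- arXiv:2507.02889 — 2 statements merged into one kernel-verified Lean document; each statement's English description precedes it below -/
import Mathlib

section
/- Let α > 0, β > 0, γ > 0, λ ∈ ℝ, and let s > 0 be a real number with |λ| < s^α. Then ∫₀^∞ e^{−st} · (∑_{k=0}^∞ (Γ(γ+k)/(Γ(γ) · k!)) · λ^k · t^{αk+β−1} · (ln t − ψ(αk+β)) / Γ(αk+β)) dt = − s^{αγ−β} · ln s / (s^α − λ)^γ. (The integrand series is the term-by-term derivative with respect to β of t^{β−1} E^γ_{α,β}(λ t^α).) -/
open Real MeasureTheory

/-- The digamma function `ψ(x) = the logarithmic derivative of Γ`, i.e. the derivative of `log ∘ Γ`. -/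
noncomputable def digamma (x : ℝ) : ℝ := deriv (fun y : ℝ => Real.log (Real.Gamma y)) x

/-!
The kernel `t ^ (b - 1) / Γ(b)` has Laplace transform `s ^ (-b)`, so its derivative in `b` has
Laplace transform `-(s ^ (-b) * log s)`. Summing over `b = α * k + β` with the coefficients of
`(1 - x) ^ (-γ)` leaves `-(s ^ (-β) * log s)` times the binomial series at `x = lam / s ^ α`.

Integrating term by term needs the `L¹` norms of these derivatives, which carry the sign of
`log t - ψ(b)`. Since `|u| = 2 * max u 0 - u` and the signed integral is known, it suffices to bound
the positive part; as `ψ` is increasing on `(0, ∞)` and `log t ≤ t`, it is at most `t + |ψ(β)|`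
for every `b ≥ β`.
-/

open Filter Topology Set

section Mellin

lemma cpow_smul_ofReal_eqOn (f : ℝ → ℝ) (x : ℝ) :
    EqOn (fun t : ℝ => (t : ℂ) ^ ((x : ℂ) - 1) • (f t : ℂ))
      (fun t => ((t ^ (x - 1) * f t : ℝ) : ℂ)) (Ioi 0) := fun t ht => by
  simp [Complex.ofReal_cpow (le_of_lt ht)]

lemma mellin_ofReal (f : ℝ → ℝ) (x : ℝ) :
    mellin (fun t => (f t : ℂ)) x = ((∫ t in Ioi 0, t ^ (x - 1) * f t : ℝ) : ℂ) := by
  rw [mellin, setIntegral_congr_fun measurableSet_Ioi (cpow_smul_ofReal_eqOn f x)]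
  exact integral_ofReal

lemma integrableOn_rpow_mul_of_mellinConvergent {f : ℝ → ℝ} {x : ℝ}
    (hf : MellinConvergent (fun t => (f t : ℂ)) x) :
    IntegrableOn (fun t => t ^ (x - 1) * f t) (Ioi 0) := by
  rw [MellinConvergent,
    integrableOn_congr_fun (cpow_smul_ofReal_eqOn f x) measurableSet_Ioi] at hf
  exact hf.re

lemma hasDerivAt_integral_rpow_mul_of_isBigO_rpow {f : ℝ → ℝ} {a b x : ℝ}
    (hfc : LocallyIntegrableOn f (Ioi 0)) (hf_top : f =O[atTop] (· ^ (-a)))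
    (hx_top : x < a) (hf_bot : f =O[𝓝[>] 0] (· ^ (-b))) (hx_bot : b < x) :
    IntegrableOn (fun t => t ^ (x - 1) * (log t * f t)) (Ioi 0) ∧
      HasDerivAt (fun y => ∫ t in Ioi 0, t ^ (y - 1) * f t)
        (∫ t in Ioi 0, t ^ (x - 1) * (log t * f t)) x := by
  have norm_ofReal : ∀ t, ‖(f t : ℂ)‖ = ‖f t‖ := fun t => Complex.norm_real _
  have hfc' : LocallyIntegrableOn (fun t => (f t : ℂ)) (Ioi 0) := fun t ht =>
    (hfc t ht).imp fun _ hu => ⟨hu.1, hu.2.ofReal⟩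
  obtain ⟨hconv, hderiv⟩ := mellin_hasDerivAt_of_isBigO_rpow (s := x) hfc'
    ((Asymptotics.isBigO_of_le _ fun t => (norm_ofReal t).le).trans hf_top) hx_top
    ((Asymptotics.isBigO_of_le _ fun t => (norm_ofReal t).le).trans hf_bot) hx_bot
  have log_smul : (fun t => log t • (f t : ℂ)) = fun t => ((log t * f t : ℝ) : ℂ) := by
    ext t; simp
  rw [log_smul] at hconv hderiv
  refine ⟨integrableOn_rpow_mul_of_mellinConvergent hconv, ?_⟩
  simpa only [mellin_ofReal, Complex.ofReal_re] using hderiv.real_of_complex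

end Mellin

section Digamma

lemma hasDerivAt_log_Gamma {b : ℝ} (hb : 0 < b) :
    HasDerivAt (fun y => log (Gamma y)) (digamma b) b :=
  ((differentiableOn_Gamma_Ioi.differentiableAt (Ioi_mem_nhds hb)).log
    (Gamma_pos_of_pos hb).ne').hasDerivAt

lemma monotoneOn_digamma : MonotoneOn digamma (Ioi 0) :=
  convexOn_log_Gamma.monotoneOn_deriv fun _ hx => (hasDerivAt_log_Gamma hx).differentiableAt

lemma hasDerivAt_Gamma_mul_digamma {b : ℝ} (hb : 0 < b) :
    HasDerivAt Gamma (Gamma b * digamma b) b := by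
  have hGamma := (differentiableOn_Gamma_Ioi.differentiableAt (Ioi_mem_nhds hb)).hasDerivAt
  have hΓ := (Gamma_pos_of_pos hb).ne'
  have hlog : digamma b = deriv Gamma b / Gamma b :=
    (hasDerivAt_log_Gamma hb).unique (hGamma.log hΓ)
  rwa [hlog, mul_div_cancel₀ _ hΓ]

end Digamma

section Laplace

variable {b s : ℝ}

lemma integrableOn_rpow_mul_exp_neg_mul (hb : 0 < b) (hs : 0 < s) :
    IntegrableOn (fun t => t ^ (b - 1) * exp (-(s * t))) (Ioi 0) := by
  simpa using integrableOn_rpow_mul_exp_neg_mul_rpow (s := b - 1) (by linarith) one_pos hs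

lemma integral_rpow_mul_exp_neg_mul (hb : 0 < b) (hs : 0 < s) :
    ∫ t in Ioi 0, t ^ (b - 1) * exp (-(s * t)) = s ^ (-b) * Gamma b := by
  rw [integral_rpow_mul_exp_neg_mul_Ioi hb hs, one_div, inv_rpow hs.le, rpow_neg hs.le]

lemma hasDerivAt_integral_rpow_mul_exp_neg_mul (hb : 0 < b) (hs : 0 < s) :
    IntegrableOn (fun t => t ^ (b - 1) * (log t * exp (-(s * t)))) (Ioi 0) ∧
      HasDerivAt (fun y => ∫ t in Ioi 0, t ^ (y - 1) * exp (-(s * t)))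
        (∫ t in Ioi 0, t ^ (b - 1) * (log t * exp (-(s * t)))) b := by
  have hcont : Continuous fun t => exp (-(s * t)) := by fun_prop
  refine hasDerivAt_integral_rpow_mul_of_isBigO_rpow
    (hcont.continuousOn.locallyIntegrableOn measurableSet_Ioi) ?_ (lt_add_one b) ?_ hb
  · simpa only [neg_mul] using (isLittleO_exp_neg_mul_rpow_atTop hs (-(b + 1))).isBigO
  · simpa using (hcont.tendsto 0).isBigO_one ℝ |>.mono nhdsWithin_le_nhds

lemma integral_rpow_mul_log_mul_exp_neg_mul (hb : 0 < b) (hs : 0 < s) :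
    ∫ t in Ioi 0, t ^ (b - 1) * (log t * exp (-(s * t))) =
      s ^ (-b) * Gamma b * (digamma b - log s) := by
  have hclosed : HasDerivAt (fun y => s ^ (-y) * Gamma y)
      (s ^ (-b) * Gamma b * (digamma b - log s)) b :=
    (((hasDerivAt_neg b).const_rpow hs).mul (hasDerivAt_Gamma_mul_digamma hb)).congr_deriv
      (by ring)
  refine (hasDerivAt_integral_rpow_mul_exp_neg_mul hb hs).2.unique
    (hclosed.congr_of_eventuallyEq ?_)
  filter_upwards [lt_mem_nhds hb] with y hy using integral_rpow_mul_exp_neg_mul hy hs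

end Laplace

/-- The derivative in the order `b` of the Riemann–Liouville kernel `t ^ (b - 1) / Γ(b)`, the
summand of the differentiated Prabhakar series. The derivative is encoded by its closed form, which
represents it only for `0 < b` and `0 < t`. -/
noncomputable def riemannLiouvilleKernelDeriv (b t : ℝ) : ℝ :=
  t ^ (b - 1) * (log t - digamma b) / Gamma b

section RiemannLiouvilleKernelDeriv

variable {a b s : ℝ}

lemma exp_mul_riemannLiouvilleKernelDeriv (s b t : ℝ) :
    exp (-(s * t)) * riemannLiouvilleKernelDeriv b t =
      (Gamma b)⁻¹ * (t ^ (b - 1) * (log t * exp (-(s * t)))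
        - digamma b * (t ^ (b - 1) * exp (-(s * t)))) := by
  rw [riemannLiouvilleKernelDeriv]; ring

lemma integrableOn_exp_mul_riemannLiouvilleKernelDeriv (hb : 0 < b) (hs : 0 < s) :
    IntegrableOn (fun t => exp (-(s * t)) * riemannLiouvilleKernelDeriv b t) (Ioi 0) := by
  simp_rw [exp_mul_riemannLiouvilleKernelDeriv]
  exact ((hasDerivAt_integral_rpow_mul_exp_neg_mul hb hs).1.sub
    ((integrableOn_rpow_mul_exp_neg_mul hb hs).const_mul _)).const_mul _

lemma integral_exp_mul_riemannLiouvilleKernelDeriv (hb : 0 < b) (hs : 0 < s) :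
    ∫ t in Ioi 0, exp (-(s * t)) * riemannLiouvilleKernelDeriv b t = -(s ^ (-b) * log s) := by
  simp_rw [exp_mul_riemannLiouvilleKernelDeriv]
  rw [integral_const_mul, integral_sub (hasDerivAt_integral_rpow_mul_exp_neg_mul hb hs).1
    ((integrableOn_rpow_mul_exp_neg_mul hb hs).const_mul _), integral_const_mul,
    integral_rpow_mul_log_mul_exp_neg_mul hb hs, integral_rpow_mul_exp_neg_mul hb hs]
  have := (Gamma_pos_of_pos hb).ne'
  field_simp
  ring

lemma abs_log_sub_digamma_le (ha : 0 < a) (hab : a ≤ b) {t : ℝ} (ht : 0 < t) :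
    |log t - digamma b| ≤ 2 * (t + |digamma a|) - (log t - digamma b) := by
  have hmono : digamma a ≤ digamma b := monotoneOn_digamma ha (ha.trans_le hab) hab
  have hlog : log t ≤ t - 1 := log_le_sub_one_of_pos ht
  have hneg : -|digamma a| ≤ digamma a := neg_abs_le _
  have habs : 0 ≤ |digamma a| := abs_nonneg _
  rw [abs_le]
  constructor <;> linarith

lemma exp_mul_abs_riemannLiouvilleKernelDeriv_le (ha : 0 < a) (hab : a ≤ b) {t : ℝ} (ht : 0 < t) :
    exp (-(s * t)) * |riemannLiouvilleKernelDeriv b t| ≤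
      2 / Gamma b * (t ^ b * exp (-(s * t))
        + |digamma a| * (t ^ (b - 1) * exp (-(s * t))))
        - exp (-(s * t)) * riemannLiouvilleKernelDeriv b t := by
  have hΓ : 0 < Gamma b := Gamma_pos_of_pos (ha.trans_le hab)
  have hpow : t ^ b = t ^ (b - 1) * t := by rw [← rpow_add_one ht.ne', sub_add_cancel]
  rw [riemannLiouvilleKernelDeriv, abs_div, abs_mul, abs_of_pos hΓ,
    abs_of_pos (rpow_pos_of_pos ht _), hpow]
  calc exp (-(s * t)) * (t ^ (b - 1) * |log t - digamma b| / Gamma b)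
      ≤ exp (-(s * t)) * (t ^ (b - 1) *
          (2 * (t + |digamma a|) - (log t - digamma b)) / Gamma b) := by
        gcongr
        exact abs_log_sub_digamma_le ha hab ht
    _ = _ := by ring

lemma integral_exp_mul_abs_riemannLiouvilleKernelDeriv_le (ha : 0 < a) (hab : a ≤ b) (hs : 0 < s) :
    ∫ t in Ioi 0, exp (-(s * t)) * |riemannLiouvilleKernelDeriv b t| ≤
      2 / s * (b * s ^ (-b)) + (2 * |digamma a| + log s) * s ^ (-b) := by
  have hb : 0 < b := ha.trans_le hab
  have hΓ := (Gamma_pos_of_pos hb).ne'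
  have hint := integrableOn_exp_mul_riemannLiouvilleKernelDeriv hb hs
  have hint_succ : IntegrableOn (fun t => t ^ b * exp (-(s * t))) (Ioi 0) := by
    simpa only [add_sub_cancel_right] using
      integrableOn_rpow_mul_exp_neg_mul (add_pos hb one_pos) hs
  have hintegral_succ : ∫ t in Ioi 0, t ^ b * exp (-(s * t)) = s ^ (-(b + 1)) * Gamma (b + 1) := by
    simpa only [add_sub_cancel_right] using integral_rpow_mul_exp_neg_mul (add_pos hb one_pos) hs
  have hint_pow := (integrableOn_rpow_mul_exp_neg_mul hb hs).const_mul |digamma a|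
  have hint_abs :
      IntegrableOn (fun t => exp (-(s * t)) * |riemannLiouvilleKernelDeriv b t|) (Ioi 0) := by
    simpa only [IntegrableOn, abs_mul, abs_exp] using hint.abs
  have hmajorant := (hint_succ.fun_add hint_pow).const_mul (2 / Gamma b)
  refine (setIntegral_mono_on hint_abs (hmajorant.sub hint) measurableSet_Ioi fun t ht =>
    exp_mul_abs_riemannLiouvilleKernelDeriv_le ha hab ht).trans_eq ?_
  simp only [Pi.sub_apply]
  rw [integral_sub hmajorant hint, integral_const_mul, integral_add hint_succ hint_pow,
    integral_const_mul, integral_rpow_mul_exp_neg_mul hb hs, hintegral_succ,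
    integral_exp_mul_riemannLiouvilleKernelDeriv hb hs,
    Gamma_add_one hb.ne', neg_add', rpow_sub_one hs.ne']
  field_simp
  ring

theorem hasSum_integral_exp_mul_tsum_riemannLiouvilleKernelDeriv {ι : Type*} [Countable ι]
    {c b : ι → ℝ} (ha : 0 < a) (hab : ∀ i, a ≤ b i) (hs : 0 < s)
    (hc : Summable fun i => |c i| * (b i * s ^ (-b i))) :
    HasSum (fun i => c i * -(s ^ (-b i) * log s))
      (∫ t in Ioi 0, exp (-(s * t)) * ∑' i, c i * riemannLiouvilleKernelDeriv (b i) t) := by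
  have hb : ∀ i, 0 < b i := fun i => ha.trans_le (hab i)
  have hc' : Summable fun i => |c i| * s ^ (-b i) := by
    refine (hc.mul_left a⁻¹).of_nonneg_of_le (fun i => by positivity) fun i => ?_
    rw [← div_eq_inv_mul, le_div_iff₀ ha]
    calc |c i| * s ^ (-b i) * a ≤ |c i| * s ^ (-b i) * b i := by gcongr; exact hab i
      _ = |c i| * (b i * s ^ (-b i)) := by ring
  have hint : ∀ i, IntegrableOn
      (fun t => c i * (exp (-(s * t)) * riemannLiouvilleKernelDeriv (b i) t)) (Ioi 0) :=
    fun i => (integrableOn_exp_mul_riemannLiouvilleKernelDeriv (hb i) hs).const_mul _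
  have hnorm : Summable fun i =>
      ∫ t in Ioi 0, ‖c i * (exp (-(s * t)) * riemannLiouvilleKernelDeriv (b i) t)‖ := by
    refine ((hc.mul_left (2 / s)).add (hc'.mul_left (2 * |digamma a| + log s))).of_nonneg_of_le
      (fun i => by positivity) fun i => ?_
    simp_rw [norm_eq_abs, abs_mul, abs_exp, integral_const_mul]
    calc _ ≤ |c i| * _ := mul_le_mul_of_nonneg_left
          (integral_exp_mul_abs_riemannLiouvilleKernelDeriv_le ha (hab i) hs) (abs_nonneg _)
      _ = _ := by ring
  simpa only [integral_const_mul, integral_exp_mul_riemannLiouvilleKernelDeriv (hb _) hs,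
    ← tsum_mul_left, mul_left_comm] using hasSum_integral_of_summable_integral_norm hint hnorm

end RiemannLiouvilleKernelDeriv

section BinomialSeries

lemma succ_mul_multichoose_succ {R : Type*} [CommRing R] [BinomialRing R] (r : R) (k : ℕ) :
    (k + 1) * Ring.multichoose r (k + 1) = r * Ring.multichoose (r + 1) k := by
  have : IsAddTorsionFree R := BinomialRing.toIsAddTorsionFree
  refine nsmul_right_injective k.factorial_ne_zero ?_
  calc k.factorial • ((k + 1) * Ring.multichoose r (k + 1))
      = (k + 1).factorial • Ring.multichoose r (k + 1) := by
        simp only [nsmul_eq_mul, Nat.factorial_succ]; push_cast; ring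
    _ = r * k.factorial • Ring.multichoose (r + 1) k := by
        simp only [Ring.factorial_nsmul_multichoose_eq_ascPochhammer,
          Polynomial.ascPochhammer_smeval_eq_eval]
        simp [ascPochhammer_succ_left]
    _ = k.factorial • (r * Ring.multichoose (r + 1) k) := mul_smul_comm _ _ _

lemma hasSum_multichoose_mul_pow (γ : ℝ) {x : ℝ} (hx : |x| < 1) :
    HasSum (fun k => Ring.multichoose γ k * x ^ k) (1 / (1 - x) ^ γ) := by
  simpa [FormalMultilinearSeries.ofScalars, Ring.multichoose_eq] using
    (one_div_one_sub_rpow_hasFPowerSeriesOnBall_zero γ).hasSum (y := x)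
      (by simpa [enorm_eq_nnnorm] using! hx)

lemma summable_natCast_mul_multichoose_mul_pow (γ : ℝ) {x : ℝ} (hx : |x| < 1) :
    Summable fun k : ℕ => k * (Ring.multichoose γ k * x ^ k) := by
  rw [← summable_nat_add_iff 1]
  refine ((hasSum_multichoose_mul_pow (γ + 1) hx).summable.mul_left (γ * x)).congr fun k => ?_
  push_cast
  linear_combination -x ^ (k + 1) * succ_mul_multichoose_succ γ k

lemma Gamma_add_natCast {γ : ℝ} (hγ : ∀ m : ℕ, γ ≠ -m) (k : ℕ) :
    Gamma (γ + k) = Gamma γ * (ascPochhammer ℝ k).eval γ := by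
  induction k with
  | zero => simp
  | succ k ih =>
    have hne : γ + k ≠ 0 := fun h => hγ k (eq_neg_of_add_eq_zero_left h)
    rw [Nat.cast_succ, ← add_assoc, Gamma_add_one hne, ih, ascPochhammer_succ_eval]
    ring

lemma Gamma_add_natCast_div_eq_multichoose {γ : ℝ} (hγ : ∀ m : ℕ, γ ≠ -m) (k : ℕ) :
    Gamma (γ + k) / (Gamma γ * k.factorial) = Ring.multichoose γ k := by
  have hΓ : Gamma γ ≠ 0 := Gamma_ne_zero hγ
  rw [Gamma_add_natCast hγ, mul_div_mul_left _ _ hΓ, ← Polynomial.ascPochhammer_smeval_eq_eval,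
    ← Ring.factorial_nsmul_multichoose_eq_ascPochhammer, nsmul_eq_mul,
    mul_div_cancel_left₀ _ (mod_cast k.factorial_ne_zero)]

end BinomialSeries

section Prabhakar

variable {s : ℝ}

lemma pow_mul_rpow_neg_natCast_mul_add (α β lam : ℝ) (hs : 0 < s) (k : ℕ) :
    lam ^ k * s ^ (-(α * k + β)) = s ^ (-β) * (lam / s ^ α) ^ k := by
  rw [neg_add, rpow_add hs, rpow_neg hs.le (α * k), rpow_mul_natCast hs.le, div_pow]
  ring

lemma abs_div_rpow_lt_one {α lam : ℝ} (hs : 0 < s) (hlam : |lam| < s ^ α) : |lam / s ^ α| < 1 := by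
  have hsα : 0 < s ^ α := rpow_pos_of_pos hs α
  rwa [abs_div, abs_of_pos hsα, div_lt_one hsα]

lemma summable_abs_multichoose_mul_pow_mul_rpow {α β lam : ℝ} (γ : ℝ) (hα : 0 ≤ α)
    (hβ : 0 ≤ β) (hs : 0 < s) (hlam : |lam| < s ^ α) :
    Summable fun k : ℕ =>
      |Ring.multichoose γ k * lam ^ k| * ((α * k + β) * s ^ (-(α * k + β))) := by
  have hratio := abs_div_rpow_lt_one hs hlam
  have hlinear := (((summable_natCast_mul_multichoose_mul_pow γ hratio).mul_left α).add
    ((hasSum_multichoose_mul_pow γ hratio).summable.mul_left β)).mul_left (s ^ (-β))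
  refine hlinear.abs.congr fun k => ?_
  have hweight : 0 ≤ (α * k + β) * s ^ (-(α * k + β)) := by positivity
  rw [← abs_of_nonneg hweight, ← abs_mul]
  congr 1
  linear_combination
    -(α * k + β) * Ring.multichoose γ k * pow_mul_rpow_neg_natCast_mul_add α β lam hs k

lemma rpow_neg_mul_one_div_one_sub_div_rpow {α lam : ℝ} (β γ : ℝ) (hs : 0 < s)
    (hlam : lam ≤ s ^ α) :
    s ^ (-β) * (1 / (1 - lam / s ^ α) ^ γ) = s ^ (α * γ - β) / (s ^ α - lam) ^ γ := by
  have hsα : 0 < s ^ α := rpow_pos_of_pos hs α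
  rw [one_sub_div hsα.ne', div_rpow (sub_nonneg.2 hlam) hsα.le, one_div_div, ← rpow_mul hs.le,
    ← mul_div_assoc, ← rpow_add hs, neg_add_eq_sub]

-- `Ring.multichoose γ k` is `(γ)_k / k!`, which, unlike `Γ(γ + k) / (Γ(γ) * k!)` with its
-- poles, is a polynomial in `γ`.
theorem laplace_deriv_beta_Prabhakar_general {α β lam : ℝ} (γ : ℝ) (hα : 0 ≤ α) (hβ : 0 < β)
    (hs : 0 < s) (hlam : |lam| < s ^ α) :
    (∫ t in Ioi 0, exp (-(s * t)) * ∑' k : ℕ, Ring.multichoose γ k *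
        (lam ^ k * t ^ (α * k + β - 1) *
          (log t - digamma (α * k + β)) / Gamma (α * k + β)))
      = -(s ^ (α * γ - β) * log s / (s ^ α - lam) ^ γ) := by
  have hterms := hasSum_integral_exp_mul_tsum_riemannLiouvilleKernelDeriv hβ
    (fun k : ℕ => le_add_of_nonneg_left (by positivity)) hs
    (summable_abs_multichoose_mul_pow_mul_rpow γ hα hβ.le hs hlam)
  have hbinomial := (hasSum_multichoose_mul_pow γ (abs_div_rpow_lt_one hs hlam)).mul_left
    (-(s ^ (-β) * log s))
  have hterm_eq (k : ℕ) : Ring.multichoose γ k * lam ^ k * -(s ^ (-(α * k + β)) * log s) =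
      -(s ^ (-β) * log s) * (Ring.multichoose γ k * (lam / s ^ α) ^ k) := by
    linear_combination
      -Ring.multichoose γ k * log s * pow_mul_rpow_neg_natCast_mul_add α β lam hs k
  simp_rw [hterm_eq] at hterms
  calc _ = ∫ t in Ioi 0, exp (-(s * t)) * ∑' k : ℕ,
        Ring.multichoose γ k * lam ^ k * riemannLiouvilleKernelDeriv (α * k + β) t := by
        simp only [riemannLiouvilleKernelDeriv, mul_div_assoc, mul_assoc]
    _ = -(s ^ (-β) * log s) * (1 / (1 - lam / s ^ α) ^ γ) := hterms.unique hbinomial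
    _ = -(s ^ (α * γ - β) * log s / (s ^ α - lam) ^ γ) := by
        linear_combination
          -log s * rpow_neg_mul_one_div_one_sub_div_rpow β γ hs ((le_abs_self lam).trans hlam.le)

end Prabhakar

theorem laplace_deriv_beta_Prabhakar (α β γ lam s : ℝ) (hα : 0 < α) (hβ : 0 < β)
    (hγ : 0 < γ) (hs : 0 < s) (hlam : |lam| < s ^ α) :
    (∫ t in Set.Ioi (0 : ℝ), Real.exp (-(s * t)) *
        ∑' k : ℕ, (Real.Gamma (γ + k) / (Real.Gamma γ * k.factorial)) *
          (lam ^ k * t ^ (α * k + β - 1) *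
            (Real.log t - digamma (α * k + β)) / Real.Gamma (α * k + β)))
      = -(s ^ (α * γ - β) * Real.log s / (s ^ α - lam) ^ γ) := by
  have hpole (m : ℕ) : γ ≠ -m := by linarith [m.cast_nonneg (α := ℝ)]
  simpa only [Gamma_add_natCast_div_eq_multichoose hpole] using
    laplace_deriv_beta_Prabhakar_general γ hα.le hβ hs hlam
end

section
/- Let α > 0, β > 1, let λ ∈ ℝ, and let t > 0. Then ∑_{k=0}^∞ λ^k · t^{αk+β−1} · (ln t − ψ(αk+β)) / Γ(αk+β) = ∫₀^t (ln(t − t₁) + γ₀) · t₁^{β−2} · (∑_{k=0}^∞ (λ t₁^α)^k / Γ(αk + β − 1)) dt₁; that is, the term-by-term derivative with respect to β of t^{β−1} E_{α,β}(λ t^α) equals the convolution ∫₀^t (ln(t−t₁) + γ₀) · t₁^{β−2} · E_{α,β−1}(λ t₁^α) dt₁. -/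
open Real MeasureTheory

/-! Differentiating the beta integral `∫₀ᵗ (t - u) ^ (a - 1) * u ^ (b - 1)` with respect to `a`
brings down the factor `log (t - u)`, while its closed form
`t ^ (a + b - 1) * Γ a * Γ b / Γ (a + b)` has logarithmic derivative `log t + ψ a - ψ (a + b)`.
At `a = 1`, where `ψ 1 = -γ₀`, comparing the two evaluates the convolution of `log + γ₀` with the
power `u ^ (b - 1)`. The theorem is this evaluation applied to each term of the Mittag-Leffler
series, which may be integrated termwise because `Γ` outgrows every exponential. -/

open Filter Set Topology ProbabilityTheory

section LogMoment

variable {Ω : Type*} [MeasurableSpace Ω] {μ : Measure Ω} {X w : Ω → ℝ} {s : ℝ}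

lemma hasDerivAt_integral_rpow (hX : ∀ᵐ ω ∂μ, 0 < X ω)
    (hint : ∀ᶠ r in 𝓝 s, Integrable (fun ω => X ω ^ r) μ) :
    Integrable (fun ω => log (X ω) * X ω ^ s) μ ∧
      HasDerivAt (fun r => ∫ ω, X ω ^ r ∂μ) (∫ ω, log (X ω) * X ω ^ s ∂μ) s := by
  have exp_eq (r : ℝ) : (fun ω => exp (r * log (X ω))) =ᵐ[μ] fun ω => X ω ^ r := by
    filter_upwards [hX] with ω hω
    rw [rpow_def_of_pos hω, mul_comm]
  have log_exp_eq : (fun ω => log (X ω) * exp (s * log (X ω))) =ᵐ[μ]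
      fun ω => log (X ω) * X ω ^ s := (exp_eq s).mono fun ω hω => by simp only [hω]
  have hs : s ∈ interior (integrableExpSet (fun ω => log (X ω)) μ) :=
    mem_interior_iff_mem_nhds.2 (hint.mono fun r hr => hr.congr (exp_eq r).symm)
  refine ⟨?_, ?_⟩
  · have := integrable_pow_mul_exp_of_mem_interior_integrableExpSet hs 1
    simp only [pow_one] at this
    exact this.congr log_exp_eq
  · have mgf_eq : mgf (fun ω => log (X ω)) μ = fun r => ∫ ω, X ω ^ r ∂μ :=
      funext fun r => integral_congr_ae (exp_eq r)
    simpa only [mgf_eq, integral_congr_ae log_exp_eq] using hasDerivAt_mgf hs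

lemma hasDerivAt_integral_rpow_mul (hX : ∀ᵐ ω ∂μ, 0 < X ω)
    (hw : AEMeasurable w μ) (hw_nonneg : 0 ≤ᵐ[μ] w)
    (hint : ∀ᶠ r in 𝓝 s, Integrable (fun ω => X ω ^ r * w ω) μ) :
    Integrable (fun ω => log (X ω) * X ω ^ s * w ω) μ ∧
      HasDerivAt (fun r => ∫ ω, X ω ^ r * w ω ∂μ) (∫ ω, log (X ω) * X ω ^ s * w ω ∂μ) s := by
  let ν := μ.withDensity fun ω => ENNReal.ofReal (w ω)
  have smul_eq (g : Ω → ℝ) :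
      (fun ω => (ENNReal.ofReal (w ω)).toReal • g ω) =ᵐ[μ] fun ω => g ω * w ω := by
    filter_upwards [hw_nonneg] with ω hω
    rw [ENNReal.toReal_ofReal hω, smul_eq_mul, mul_comm]
  have integrable_iff (g : Ω → ℝ) : Integrable g ν ↔ Integrable (fun ω => g ω * w ω) μ :=
    (integrable_withDensity_iff_integrable_smul₀' hw.ennreal_ofReal (by simp)).trans
      (integrable_congr (smul_eq g))
  have integral_eq (g : Ω → ℝ) : ∫ ω, g ω ∂ν = ∫ ω, g ω * w ω ∂μ :=
    (integral_withDensity_eq_integral_toReal_smul₀ hw.ennreal_ofReal (by simp) g).trans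
      (integral_congr_ae (smul_eq g))
  simpa only [integrable_iff, integral_eq] using
    hasDerivAt_integral_rpow (μ := ν) ((withDensity_absolutelyContinuous _ _).ae_le hX)
      (hint.mono fun r hr => (integrable_iff _).2 hr)

end LogMoment

section DigammaBeta

variable {a b s : ℝ}

lemma ne_neg_natCast_of_pos (hs : 0 < s) (m : ℕ) : s ≠ -m :=
  ((neg_nonpos.2 m.cast_nonneg).trans_lt hs).ne'

lemma hasDerivAt_Gamma_digamma (hs : ∀ m : ℕ, s ≠ -m) :
    HasDerivAt Gamma (digamma s * Gamma s) s := by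
  have hΓ := Gamma_ne_zero hs
  have hderiv := (differentiableAt_Gamma hs).hasDerivAt
  have digamma_eq : digamma s = deriv Gamma s / Gamma s := (hderiv.log hΓ).deriv
  rwa [digamma_eq, div_mul_cancel₀ _ hΓ]

lemma digamma_one : digamma 1 = -eulerMascheroniConstant := by
  simpa using
    (hasDerivAt_Gamma_digamma (ne_neg_natCast_of_pos one_pos)).unique hasDerivAt_Gamma_one

lemma hasDerivAt_beta_left (ha : ∀ m : ℕ, a ≠ -m) (hab : ∀ m : ℕ, a + b ≠ -m) :
    HasDerivAt (fun x => beta x b) (beta a b * (digamma a - digamma (a + b))) a := by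
  have hΓ := Gamma_ne_zero hab
  have hden : HasDerivAt (fun x => Gamma (x + b)) (digamma (a + b) * Gamma (a + b)) a :=
    (hasDerivAt_Gamma_digamma hab).comp_add_const a b
  convert! ((hasDerivAt_Gamma_digamma ha).mul_const (Gamma b)).div hden hΓ using 1
  rw [beta]
  field_simp

lemma beta_one_left (hb : ∀ m : ℕ, b ≠ -m) : beta 1 b = 1 / b := by
  have hΓ := Gamma_ne_zero hb
  rw [beta, Gamma_one, add_comm, Gamma_add_one (by simpa using hb 0)]
  field_simp

end DigammaBeta

section BetaIntegral

variable {t a b : ℝ}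

lemma integral_sub_rpow_mul_rpow (ht : 0 < t) (ha : 0 < a) (hb : 0 < b) :
    ∫ u in (0 : ℝ)..t, (t - u) ^ (a - 1) * u ^ (b - 1) = t ^ (a + b - 1) * beta a b := by
  have ofReal_integrand : ∀ u ∈ uIcc 0 t,
      (u : ℂ) ^ ((b : ℂ) - 1) * ((t : ℂ) - u) ^ ((a : ℂ) - 1) =
        (((t - u) ^ (a - 1) * u ^ (b - 1) : ℝ) : ℂ) := fun u hu => by
    rw [uIcc_of_le ht.le] at hu
    rw [Complex.ofReal_mul, Complex.ofReal_cpow hu.1, Complex.ofReal_cpow (sub_nonneg.2 hu.2)]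
    push_cast
    ring
  have scaled := Complex.betaIntegral_scaled b a ht
  rw [intervalIntegral.integral_congr ofReal_integrand, intervalIntegral.integral_ofReal,
    Complex.betaIntegral_eq_Gamma_mul_div _ _ (by simpa using hb) (by simpa using ha)] at scaled
  apply Complex.ofReal_injective
  rw [scaled, beta, add_comm a b, mul_comm (Gamma a)]
  simp [Complex.ofReal_cpow ht.le, ← Complex.Gamma_ofReal]

lemma intervalIntegrable_sub_rpow_mul_rpow (ht : 0 < t) (ha : 0 < a) (hb : 0 < b) :
    IntervalIntegrable (fun u => (t - u) ^ (a - 1) * u ^ (b - 1)) volume 0 t := by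
  apply intervalIntegral.intervalIntegrable_of_integral_ne_zero
  rw [integral_sub_rpow_mul_rpow ht ha hb]
  exact (mul_pos (rpow_pos_of_pos ht _) (beta_pos ha hb)).ne'

lemma hasDerivAt_integral_sub_rpow_mul_rpow (ht : 0 < t) (ha : 0 < a) (hb : 0 < b) :
    IntervalIntegrable (fun u => log (t - u) * (t - u) ^ (a - 1) * u ^ (b - 1)) volume 0 t ∧
      HasDerivAt (fun x => ∫ u in (0 : ℝ)..t, (t - u) ^ (x - 1) * u ^ (b - 1))
        (∫ u in (0 : ℝ)..t, log (t - u) * (t - u) ^ (a - 1) * u ^ (b - 1)) a := by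
  simp only [intervalIntegral.integral_of_le ht.le, integral_Ioc_eq_integral_Ioo]
  have hX : ∀ᵐ u ∂volume.restrict (Ioo 0 t), 0 < t - u :=
    (ae_restrict_mem measurableSet_Ioo).mono fun u hu => sub_pos.2 hu.2
  have hw_nonneg : 0 ≤ᵐ[volume.restrict (Ioo 0 t)] fun u => u ^ (b - 1) :=
    (ae_restrict_mem measurableSet_Ioo).mono fun u hu => rpow_nonneg hu.1.le _
  have hint : ∀ᶠ r in 𝓝 (a - 1), IntegrableOn (fun u => (t - u) ^ r * u ^ (b - 1)) (Ioo 0 t) := by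
    filter_upwards [lt_mem_nhds (show -1 < a - 1 by linarith)] with r hr
    have := intervalIntegrable_sub_rpow_mul_rpow ht (show 0 < r + 1 by linarith) hb
    rwa [add_sub_cancel_right, intervalIntegrable_iff_integrableOn_Ioo_of_le ht.le] at this
  obtain ⟨hlog, hderiv⟩ := hasDerivAt_integral_rpow_mul hX (by fun_prop) hw_nonneg hint
  exact ⟨(intervalIntegrable_iff_integrableOn_Ioo_of_le ht.le).2 hlog, hderiv.comp_sub_const a 1⟩

lemma integral_log_mul_sub_rpow_mul_rpow (ht : 0 < t) (ha : 0 < a) (hb : 0 < b) :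
    ∫ u in (0 : ℝ)..t, log (t - u) * (t - u) ^ (a - 1) * u ^ (b - 1) =
      t ^ (a + b - 1) * beta a b * (log t + digamma a - digamma (a + b)) := by
  have hpow : HasDerivAt (fun x => t ^ (x + b - 1)) (log t * 1 * t ^ (a + b - 1)) a :=
    (((hasDerivAt_id a).add_const b).sub_const 1).const_rpow ht
  have hclosed : (fun x => ∫ u in (0 : ℝ)..t, (t - u) ^ (x - 1) * u ^ (b - 1)) =ᶠ[𝓝 a]
      fun x => t ^ (x + b - 1) * beta x b := by
    filter_upwards [lt_mem_nhds ha] with x hx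
    exact integral_sub_rpow_mul_rpow ht hx hb
  have hbeta := hasDerivAt_beta_left (ne_neg_natCast_of_pos ha)
    (ne_neg_natCast_of_pos (add_pos ha hb))
  rw [(hasDerivAt_integral_sub_rpow_mul_rpow ht ha hb).2.unique
    ((hpow.mul hbeta).congr_of_eventuallyEq hclosed)]
  ring

lemma intervalIntegrable_log_sub_mul_rpow (ht : 0 < t) (hb : 0 < b) :
    IntervalIntegrable (fun u => log (t - u) * u ^ (b - 1)) volume 0 t := by
  simpa using (hasDerivAt_integral_sub_rpow_mul_rpow ht one_pos hb).1

lemma intervalIntegrable_log_sub_add_const_mul_rpow (c : ℝ) (ht : 0 < t) (hb : 0 < b) :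
    IntervalIntegrable (fun u => (log (t - u) + c) * u ^ (b - 1)) volume 0 t := by
  simp only [add_mul]
  exact (intervalIntegrable_log_sub_mul_rpow ht hb).add
    ((intervalIntegral.intervalIntegrable_rpow' (by linarith)).const_mul c)

lemma integral_log_sub_add_eulerMascheroniConstant_mul_rpow (ht : 0 < t) (hb : 0 < b) :
    ∫ u in (0 : ℝ)..t, (log (t - u) + eulerMascheroniConstant) * u ^ (b - 1) =
      t ^ b / b * (log t - digamma (b + 1)) := by
  have hlog : ∫ u in (0 : ℝ)..t, log (t - u) * u ^ (b - 1) =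
      t ^ b * (1 / b) * (log t + -eulerMascheroniConstant - digamma (b + 1)) := by
    simpa [digamma_one, beta_one_left (ne_neg_natCast_of_pos hb), add_comm b 1] using
      integral_log_mul_sub_rpow_mul_rpow ht one_pos hb
  have hpow : ∫ u in (0 : ℝ)..t, u ^ (b - 1) = t ^ b / b := by
    rw [integral_rpow (Or.inl (by linarith)), sub_add_cancel, zero_rpow hb.ne', sub_zero]
  simp only [add_mul]
  rw [intervalIntegral.integral_add (intervalIntegrable_log_sub_mul_rpow ht hb)
    ((intervalIntegral.intervalIntegrable_rpow' (by linarith)).const_mul _),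
    intervalIntegral.integral_const_mul, hlog, hpow]
  ring

lemma integral_log_sub_add_eulerMascheroniConstant_mul_rpow_mul_rpow {c : ℝ} (ht : 0 < t)
    (hcb : 0 < c + b) :
    ∫ u in (0 : ℝ)..t, (log (t - u) + eulerMascheroniConstant) * u ^ (b - 1) * u ^ c =
      t ^ (c + b) / (c + b) * (log t - digamma (c + b + 1)) := by
  rw [← integral_log_sub_add_eulerMascheroniConstant_mul_rpow ht hcb]
  refine intervalIntegral.integral_congr_Ioo_of_le ht.le fun u hu => ?_
  simp only [mul_assoc, ← rpow_add hu.1]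
  ring_nf

end BetaIntegral

section MittagLeffler

/-- The two-parameter Mittag-Leffler function `E_{α,β}(z) = ∑ z ^ k / Γ(α k + β)` of a real
variable, meant for `0 < α`, when the series converges for every `z`. A term for which `Γ` has a
pole vanishes because Mathlib sets `Γ` to `0` there, in accordance with `1 / Γ` being entire. -/
noncomputable def mittagLeffler (α β z : ℝ) : ℝ := ∑' k : ℕ, z ^ k / Gamma (α * k + β)

lemma exp_neg_mul_rpow_le_Gamma {R y : ℝ} (hR : 0 ≤ R) (hy : 1 ≤ y) :
    exp (-R) * R ^ (y - 1) ≤ Gamma y := by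
  have hΓ := GammaIntegral_convergent (zero_lt_one.trans_le hy)
  have hsub : Ioi R ⊆ Ioi 0 := Ioi_subset_Ioi hR
  calc exp (-R) * R ^ (y - 1) = ∫ x in Ioi R, exp (-x) * R ^ (y - 1) := by
        rw [integral_mul_const, integral_exp_neg_Ioi]
    _ ≤ ∫ x in Ioi R, exp (-x) * x ^ (y - 1) := by
        refine setIntegral_mono_on ((integrableOn_exp_neg_Ioi R).mul_const _) (hΓ.mono_set hsub)
          measurableSet_Ioi fun x hx => ?_
        gcongr
        exact (mem_Ioi.1 hx).le
    _ ≤ ∫ x in Ioi 0, exp (-x) * x ^ (y - 1) :=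
        setIntegral_mono_set hΓ
          ((ae_restrict_mem measurableSet_Ioi).mono fun x hx =>
            mul_nonneg (exp_pos _).le (rpow_nonneg (mem_Ioi.1 hx).le _))
          hsub.eventuallyLE
    _ = Gamma y := (Gamma_eq_integral (zero_lt_one.trans_le hy)).symm

variable {α : ℝ}

lemma summable_pow_div_Gamma (hα : 0 < α) (β z : ℝ) :
    Summable fun k : ℕ => z ^ k / Gamma (α * k + β) := by
  -- Bounding `Γ` below at the radius `R = A ^ α⁻¹` gives `Γ(α k + β) ≥ c * A ^ k` with `|z| < A`.
  let A : ℝ := |z| + 1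
  have hA : 0 < A := by positivity
  let R : ℝ := A ^ α⁻¹
  have hR : 0 < R := rpow_pos_of_pos hA _
  let c : ℝ := exp (-R) * R ^ (β - 1)
  have hc : 0 < c := mul_pos (exp_pos _) (rpow_pos_of_pos hR _)
  have hgeom : Summable fun k : ℕ => c⁻¹ * (|z| / A) ^ k :=
    (summable_geometric_of_lt_one (by positivity) ((div_lt_one hA).2 (lt_add_one _))).mul_left _
  refine hgeom.of_norm_bounded_eventually_nat ?_
  have hlarge : ∀ᶠ k : ℕ in atTop, 1 ≤ α * k + β :=
    (tendsto_atTop_add_const_right _ β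
      (tendsto_natCast_atTop_atTop.const_mul_atTop hα)).eventually_ge_atTop 1
  filter_upwards [hlarge] with k hk
  have hΓ : c * A ^ k ≤ Gamma (α * k + β) := by
    convert exp_neg_mul_rpow_le_Gamma hR.le hk using 1
    have : R ^ (α * k) = A ^ k := by
      rw [rpow_mul hR.le, rpow_inv_rpow hA.le hα.ne', rpow_natCast]
    rw [add_sub_assoc, rpow_add hR, this]
    ring
  rw [norm_div, norm_pow, norm_eq_abs, norm_of_nonneg ((by positivity : 0 ≤ c * A ^ k).trans hΓ)]
  calc |z| ^ k / Gamma (α * k + β) ≤ |z| ^ k / (c * A ^ k) := by gcongr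
    _ = c⁻¹ * (|z| / A) ^ k := by rw [div_pow]; field_simp

lemma hasSum_mittagLeffler (hα : 0 < α) (β z : ℝ) :
    HasSum (fun k : ℕ => z ^ k / Gamma (α * k + β)) (mittagLeffler α β z) :=
  (summable_pow_div_Gamma hα β z).hasSum

lemma hasSum_integral_mul_mittagLeffler {Ω : Type*} [MeasurableSpace Ω] {μ : Measure Ω}
    {w g : Ω → ℝ} {C : ℝ} (hα : 0 < α) (β : ℝ) (hw : Integrable w μ)
    (hg : AEStronglyMeasurable g μ) (hgC : ∀ᵐ ω ∂μ, |g ω| ≤ C) :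
    HasSum (fun k : ℕ => (∫ ω, w ω * g ω ^ k ∂μ) / Gamma (α * k + β))
      (∫ ω, w ω * mittagLeffler α β (g ω) ∂μ) := by
  simp only [← integral_div, mul_div_assoc]
  have hsum : Summable fun k : ℕ => |C| ^ k / |Gamma (α * k + β)| := by
    simpa only [abs_div, abs_pow] using (summable_pow_div_Gamma hα β C).abs
  refine hasSum_integral_of_dominated_convergence
    (fun k ω => ‖w ω‖ * (|C| ^ k / |Gamma (α * k + β)|))
    (fun k => hw.1.mul ((hg.pow k).mul_const _)) (fun k => ?_)
    (ae_of_all _ fun ω => hsum.mul_left _) ?_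
    (ae_of_all _ fun ω => (hasSum_mittagLeffler hα β (g ω)).mul_left _)
  · filter_upwards [hgC] with ω hω
    rw [norm_mul, norm_div, norm_pow, norm_eq_abs (g ω), norm_eq_abs (Gamma _)]
    have : |g ω| ≤ |C| := hω.trans (le_abs_self C)
    gcongr
  · simpa only [tsum_mul_left] using hw.norm.mul_const _

lemma hasSum_intervalIntegral_mul_mittagLeffler {w : ℝ → ℝ} {t : ℝ} (hα : 0 < α) (β z : ℝ)
    (ht : 0 ≤ t) (hw : IntervalIntegrable w volume 0 t) :
    HasSum (fun k : ℕ => (z ^ k * ∫ u in (0 : ℝ)..t, w u * u ^ (α * k)) / Gamma (α * k + β))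
      (∫ u in (0 : ℝ)..t, w u * mittagLeffler α β (z * u ^ α)) := by
  simp only [intervalIntegral.integral_of_le ht, ← integral_const_mul]
  have hbound : ∀ᵐ u ∂volume.restrict (Ioc 0 t), |z * u ^ α| ≤ |z| * t ^ α := by
    filter_upwards [ae_restrict_mem measurableSet_Ioc] with u hu
    rw [abs_mul, abs_of_nonneg (rpow_nonneg hu.1.le α)]
    exact mul_le_mul_of_nonneg_left (rpow_le_rpow hu.1.le hu.2 hα.le) (abs_nonneg z)
  convert! hasSum_integral_mul_mittagLeffler hα β hw.1 (by fun_prop) hbound using 3 with k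
  refine setIntegral_congr_fun measurableSet_Ioc fun u hu => ?_
  simp only [mul_pow, rpow_mul_natCast hu.1.le]
  ring

end MittagLeffler

theorem deriv_beta_ML_convolution (α β lam t : ℝ) (hα : 0 < α) (hβ : 1 < β)
    (ht : 0 < t) :
    (∑' k : ℕ, lam ^ k * t ^ (α * k + β - 1) *
        (Real.log t - digamma (α * k + β)) / Real.Gamma (α * k + β))
      = ∫ t₁ in (0 : ℝ)..t,
          (Real.log (t - t₁) + Real.eulerMascheroniConstant) * t₁ ^ (β - 2) *
            ∑' k : ℕ, (lam * t₁ ^ α) ^ k / Real.Gamma (α * k + β - 1) := by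
  have hb : 0 < β - 1 := sub_pos.2 hβ
  have hw := intervalIntegrable_log_sub_add_const_mul_rpow eulerMascheroniConstant ht hb
  have series_eq (z : ℝ) :
      ∑' k : ℕ, z ^ k / Gamma (α * k + β - 1) = mittagLeffler α (β - 1) z := by
    simp only [mittagLeffler, add_sub_assoc]
  simp only [series_eq, show β - 2 = β - 1 - 1 by ring]
  rw [← (hasSum_intervalIntegral_mul_mittagLeffler hα (β - 1) lam ht.le hw).tsum_eq]
  refine tsum_congr fun k => ?_
  have hs : 0 < α * k + (β - 1) := by positivity
  rw [integral_log_sub_add_eulerMascheroniConstant_mul_rpow_mul_rpow ht hs,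
    show α * k + β = α * k + (β - 1) + 1 by ring, Gamma_add_one hs.ne', add_sub_cancel_right]
  field_simp
end
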